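/- Let n ≥ 2, let e₁ ∈ ℝⁿ be the first standard basis vector, let w_j = 2^{−j} e₁ for integers j ≥ 2, and set Ω = B(0,2) \ ( {0} ∪ ⋃_{j≥2} closedBall(w_j, 2^{−2j}) ), where B(0,2) is the open ball of radius 2 centered at the origin. Then for every p with 1 < p < n, the open set Ω admits a p-Hardy inequality: there exists C > 0 such that ∫_Ω |u(x)|^p d_Ω(x)^{−p} dx ≤ C ∫_Ω ‖∇u(x)‖^p dx for every Lipschitz function u : ℝⁿ → ℝ with compact support contained in Ω. -/

import Mathlib

open MeasureTheory Metric ENNReal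

/-!
A vector field `X` on `U` with `div X` large compared with `δ ^ (-p)` and `|X|` small compared with
`δ ^ (1 - p)` yields the `p`-Hardy inequality with weight `δ` on `U`: integrate `|u| ^ p * div X` by
parts and apply Young's inequality. Radial fields handle the distance to the boundary sphere of a
ball and, since `p < n`, the distance to a closed ball, with a constant independent of its radius;
radius zero is the classical Hardy inequality with weight `‖x‖`.

Let the holes be centred at `w i`, with radii at most `‖w i‖ / 4`. At a point `x` where the distance
to `Ωᶜ` is neither comparable to `‖x‖` nor equal to `R - ‖x‖`, it is the distance to a single hole,
and `x` lies well inside the ball `B(w i, ‖w i‖ / 3)`. These balls are disjoint, so cutting `u` off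
to each of them and applying the inequality for that hole costs only an error
`|u| / ‖w i‖ ≲ |u| / ‖x‖`, which the Hardy inequality at the origin absorbs.
-/

section Divergence

variable {E : Type*} [NormedAddCommGroup E] [NormedSpace ℝ E]

/-- The divergence of a vector field, encoded basis-free as the trace of its derivative. -/
noncomputable def divergence (X : E → E) (x : E) : ℝ :=
  LinearMap.trace ℝ E (fderiv ℝ X x : E →ₗ[ℝ] E)

lemma divergence_smul [FiniteDimensional ℝ E] {f : E → ℝ} {X : E → E} {x : E}
    (hf : DifferentiableAt ℝ f x) (hX : DifferentiableAt ℝ X x) :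
    divergence (fun y => f y • X y) x = fderiv ℝ f x (X x) + f x * divergence X x := by
  rw [divergence, fderiv_fun_smul hf hX, ContinuousLinearMap.toLinearMap_add,
    ContinuousLinearMap.toLinearMap_smul, map_add, map_smul, add_comm]
  exact congrArg (· + _) (LinearMap.trace_smulRight _ _)

lemma divergence_sub_const [FiniteDimensional ℝ E] (w x : E) :
    divergence (fun y => y - w) x = Module.finrank ℝ E := by
  rw [divergence, fderiv_sub_const, fderiv_fun_id]
  exact LinearMap.trace_id ℝ E

lemma divergence_eq_sum_coord {ι : Type*} [Fintype ι] (b : Module.Basis ι ℝ E) (X : E → E) (x : E) :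
    divergence X x = ∑ i, b.coord i (fderiv ℝ X x (b i)) := by
  classical
  simp [divergence, LinearMap.trace_eq_matrix_trace ℝ b, Matrix.trace, LinearMap.toMatrix_apply]

lemma continuous_divergence [FiniteDimensional ℝ E] {X : E → E} (hX : ContDiff ℝ 1 X) :
    Continuous (divergence X) :=
  (LinearMap.continuous_of_finiteDimensional
    (LinearMap.trace ℝ E ∘ₗ ContinuousLinearMap.coeLM ℝ)).comp (hX.continuous_fderiv one_ne_zero)

variable [FiniteDimensional ℝ E] [MeasurableSpace E] [BorelSpace E] {μ : Measure E}
  [μ.IsAddHaarMeasure]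

lemma integrable_fderiv_apply_of_lipschitzWith {φ : E → ℝ} {X : E → E} {L : NNReal}
    (hφ : LipschitzWith L φ) (hX : Continuous X) (hXc : HasCompactSupport X) :
    Integrable (fun x => fderiv ℝ φ x (X x)) μ := by
  have hbound : Integrable (fun x => L * ‖X x‖) μ :=
    (hX.integrable_of_hasCompactSupport hXc).norm.const_mul _
  refine hbound.mono' ?_ (.of_forall fun x => ?_)
  · exact (ContinuousLinearMap.apply ℝ ℝ).flip.aestronglyMeasurable_comp₂
      (measurable_fderiv ℝ φ).aestronglyMeasurable hX.aestronglyMeasurable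
  · exact ((fderiv ℝ φ x).le_opNorm _).trans <| by
      gcongr
      exact norm_fderiv_le_of_lipschitz ℝ hφ

lemma integral_mul_fderiv_apply_eq_neg {φ g : E → ℝ} {L : NNReal} (hφ : LipschitzWith L φ)
    (hg : ContDiff ℝ 1 g) (hgc : HasCompactSupport g) (v : E) :
    ∫ x, φ x * fderiv ℝ g x v ∂μ = -∫ x, fderiv ℝ φ x (g x • v) ∂μ := by
  obtain ⟨D, hD⟩ := hg.lipschitzWith_of_hasCompactSupport hgc one_ne_zero
  have hφv : ∀ᵐ x ∂μ, fderiv ℝ φ x (g x • v) = lineDeriv ℝ φ x v * g x := by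
    filter_upwards [hφ.ae_differentiableAt] with x hx
    rw [hx.lineDeriv_eq_fderiv, map_smul, smul_eq_mul, mul_comm]
  have hgv x : lineDeriv ℝ g x (-v) * φ x = -(φ x * fderiv ℝ g x v) := by
    rw [(hg.differentiable one_ne_zero).differentiableAt.lineDeriv_eq_fderiv, map_neg]
    ring
  rw [integral_congr_ae hφv, hφ.integral_lineDeriv_mul_eq hD hgc v]
  simp_rw [hgv, integral_neg, neg_neg]

lemma integral_mul_divergence_eq_neg {φ : E → ℝ} {X : E → E} {L : NNReal}
    (hφ : LipschitzWith L φ) (hX : ContDiff ℝ 1 X) (hXc : HasCompactSupport X) :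
    ∫ x, φ x * divergence X x ∂μ = -∫ x, fderiv ℝ φ x (X x) ∂μ := by
  let b := Module.finBasis ℝ E
  let coord i : E →L[ℝ] ℝ := (b.coord i).toContinuousLinearMap
  let Xi i x : ℝ := coord i (X x)
  have hXi i : ContDiff ℝ 1 (Xi i) := (coord i).contDiff.comp hX
  have hXic i : HasCompactSupport (Xi i) := hXc.comp_left (map_zero _)
  have hdiv x : φ x * divergence X x = ∑ i, φ x * fderiv ℝ (Xi i) x (b i) := by
    have hXx : HasFDerivAt X (fderiv ℝ X x) x :=
      ((hX.differentiable one_ne_zero) x).hasFDerivAt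
    rw [divergence_eq_sum_coord b, Finset.mul_sum]
    refine Finset.sum_congr rfl fun i _ => ?_
    exact congrArg (φ x * · (b i)) ((coord i).hasFDerivAt.comp x hXx).fderiv.symm
  have hgrad x : fderiv ℝ φ x (X x) = ∑ i, fderiv ℝ φ x (Xi i x • b i) := by
    rw [← map_sum]
    exact congrArg _ (b.sum_repr (X x)).symm
  simp_rw [hdiv, hgrad]
  rw [integral_finsetSum, integral_finsetSum, ← Finset.sum_neg_distrib]
  · exact Finset.sum_congr rfl fun i _ =>
      integral_mul_fderiv_apply_eq_neg hφ (hXi i) (hXic i) (b i)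
  · exact fun i _ => integrable_fderiv_apply_of_lipschitzWith hφ
      ((hXi i).continuous.smul continuous_const) (hXic i).smul_right
  · exact fun i _ => (hφ.continuous.mul
      (((hXi i).continuous_fderiv one_ne_zero).clm_apply continuous_const)
      ).integrable_of_hasCompactSupport ((hXic i).fderiv_apply ℝ (b i)).mul_left

end Divergence

section VectorFieldMethod

variable {E : Type*} [NormedAddCommGroup E] [NormedSpace ℝ E]

/-- The `p`-Hardy inequality with weight `δ`, for Lipschitz functions compactly supported in `U`,
where the weighted integral extends over `A` only. The energy is always taken over the whole space,
and the constant may be any `C : ℝ≥0∞`, so that constants of different bounds combine freely. -/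
def HardyBound [MeasurableSpace E] (μ : Measure E) (p : ℝ) (U A : Set E) (δ : E → ℝ) (C : ℝ≥0∞) :
    Prop :=
  ∀ u : E → ℝ, (∃ L, LipschitzWith L u) → HasCompactSupport u → tsupport u ⊆ U →
    ∫⁻ x in A, .ofReal (|u x| ^ p * δ x ^ (-p)) ∂μ ≤ C * ∫⁻ x, .ofReal (‖fderiv ℝ u x‖ ^ p) ∂μ

lemma rpow_sub_one_mul_le {p a b : ℝ} (hp : 1 < p) (ha : 0 ≤ a) (hb : 0 ≤ b) :
    a ^ (p - 1) * b ≤ (1 - 1 / p) * a ^ p + b ^ p / p := by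
  have hconj : (p / (p - 1)).HolderConjugate p := (Real.HolderConjugate.conjExponent hp).symm
  refine (Real.young_inequality_of_nonneg (by positivity) hb hconj).trans_eq ?_
  rw [← Real.rpow_mul ha, mul_div_cancel₀ _ (by linarith)]
  field_simp

lemma abs_rpow_sub_two_mul_self {p t : ℝ} (hp : 1 < p) :
    |(|t| ^ (p - 2) * t)| = |t| ^ (p - 1) := by
  rw [abs_mul, abs_of_nonneg (by positivity), ← Real.rpow_add_one' (abs_nonneg t) (by linarith)]
  ring_nf

lemma exists_lipschitzWith_abs_rpow {α : Type*} [PseudoEMetricSpace α] {u : α → ℝ} {p B : ℝ}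
    {L : NNReal} (hp : 1 < p) (hu : LipschitzWith L u) (hB : ∀ x, |u x| ≤ B) :
    ∃ M, LipschitzWith M (fun x => |u x| ^ p) := by
  have hpow :
      LipschitzOnWith (p * B ^ (p - 1)).toNNReal (fun t : ℝ => |t| ^ p) (Set.Icc (-B) B) := by
    refine (convex_Icc _ _).lipschitzOnWith_of_nnnorm_hasDerivWithin_le
      (fun t _ => (hasDerivAt_abs_rpow t hp).hasDerivWithinAt) fun t ht => ?_
    rw [← norm_toNNReal, Real.norm_eq_abs, mul_assoc, abs_mul, abs_rpow_sub_two_mul_self hp,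
      abs_of_pos (by linarith)]
    gcongr
    exact abs_le.mpr ht
  exact ⟨_, lipschitzOnWith_univ.mp
    (hpow.comp hu.lipschitzOnWith fun x _ => abs_le.mp (hB x))⟩

lemma abs_fderiv_abs_rpow_apply_le {u : E → ℝ} {p : ℝ} {x : E} (hp : 1 < p)
    (hu : DifferentiableAt ℝ u x) (v : E) :
    |fderiv ℝ (fun y => |u y| ^ p) x v| ≤ p * |u x| ^ (p - 1) * (‖fderiv ℝ u x‖ * ‖v‖) := by
  have hderiv : HasFDerivAt (fun y => |u y| ^ p) ((p * |u x| ^ (p - 2) * u x) • fderiv ℝ u x) x :=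
    (hasDerivAt_abs_rpow (u x) hp).comp_hasFDerivAt x hu.hasFDerivAt
  have heq : fderiv ℝ (fun y => |u y| ^ p) x v = p * (|u x| ^ (p - 2) * u x) * fderiv ℝ u x v := by
    rw [hderiv.fderiv, mul_assoc p, smul_apply, smul_eq_mul]
  rw [heq, abs_mul, abs_mul, abs_rpow_sub_two_mul_self hp, abs_of_pos (by linarith)]
  gcongr
  exact (fderiv ℝ u x).le_opNorm v

lemma neg_fderiv_abs_rpow_apply_le {u : E → ℝ} {x v : E} {p c K s D : ℝ} (hp : 1 < p)
    (hu : DifferentiableAt ℝ u x) (hc : 0 < c) (hs : 0 < s) (hv : ‖v‖ ≤ K * s ^ (1 - p))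
    (hD : c * s ^ (-p) ≤ D) :
    -fderiv ℝ (fun y => |u y| ^ p) x v ≤
      (1 - 1 / p) * (|u x| ^ p * D) + c / p * (p * K / c) ^ p * ‖fderiv ℝ u x‖ ^ p := by
  have hK : 0 ≤ K := nonneg_of_mul_nonneg_left ((norm_nonneg v).trans hv) (by positivity)
  have hp' : 0 ≤ 1 - 1 / p := by
    rw [sub_nonneg, div_le_one (by linarith)]
    exact hp.le
  calc -fderiv ℝ (fun y => |u y| ^ p) x v
      ≤ p * |u x| ^ (p - 1) * (‖fderiv ℝ u x‖ * (K * s ^ (1 - p))) :=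
        (neg_le_abs _).trans <| (abs_fderiv_abs_rpow_apply_le hp hu v).trans <| by gcongr
    _ = c * ((|u x| * s⁻¹) ^ (p - 1) * (p * K / c * ‖fderiv ℝ u x‖)) := by
        rw [Real.mul_rpow (by positivity) (by positivity), Real.inv_rpow hs.le,
          ← Real.rpow_neg hs.le, neg_sub]
        field_simp
    _ ≤ c * ((1 - 1 / p) * (|u x| * s⁻¹) ^ p + (p * K / c * ‖fderiv ℝ u x‖) ^ p / p) := by
        gcongr
        exact rpow_sub_one_mul_le hp (by positivity) (by positivity)
    _ = (1 - 1 / p) * (|u x| ^ p * (c * s ^ (-p))) +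
          c / p * (p * K / c) ^ p * ‖fderiv ℝ u x‖ ^ p := by
        rw [Real.mul_rpow (by positivity) (by positivity), Real.inv_rpow hs.le,
          ← Real.rpow_neg hs.le, Real.mul_rpow (by positivity) (by positivity)]
        ring
    _ ≤ _ := by gcongr

lemma integrable_norm_fderiv_rpow [MeasurableSpace E] [BorelSpace E] {μ : Measure E}
    [IsFiniteMeasureOnCompacts μ] {u : E → ℝ} {L : NNReal} {p : ℝ} (hp : 0 < p)
    (hu : LipschitzWith L u) (huc : HasCompactSupport u) :
    Integrable (fun x => ‖fderiv ℝ u x‖ ^ p) μ := by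
  have hsupp : Function.support (fun x => ‖fderiv ℝ u x‖ ^ p) ⊆ tsupport u := by
    refine Function.support_subset_iff'.mpr fun x hx => ?_
    rw [fderiv_of_notMem_tsupport ℝ hx, norm_zero, Real.zero_rpow hp.ne']
  rw [← integrableOn_iff_integrable_of_support_subset hsupp]
  refine Measure.integrableOn_of_bounded (M := L ^ p) huc.measure_lt_top.ne
    ((measurable_fderiv ℝ u).norm.pow_const p).aestronglyMeasurable (.of_forall fun x => ?_)
  rw [Real.norm_of_nonneg (by positivity)]
  gcongr
  exact norm_fderiv_le_of_lipschitz ℝ hu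

variable [FiniteDimensional ℝ E]

lemma exists_contDiff_hasCompactSupport_eventuallyEq {F : Type*} [NormedAddCommGroup F]
    [NormedSpace ℝ F] {X : E → F} {K U : Set E} (hK : IsCompact K) (hU : IsOpen U) (hKU : K ⊆ U)
    (hX : ContDiffOn ℝ 1 X U) :
    ∃ Y : E → F, ContDiff ℝ 1 Y ∧ HasCompactSupport Y ∧ ∀ x ∈ K, Y =ᶠ[nhds x] X := by
  obtain ⟨K', hK', hKK', hK'U⟩ := exists_compact_between hK hU hKU
  obtain ⟨χ, hχ_one, hχ_zero, -⟩ := exists_contMDiffMap_one_nhds_of_subset_interior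
    (n := 1) (modelWithCornersSelf ℝ E) hK.isClosed hKK'
  have hχ_tsupport : tsupport χ ⊆ K' :=
    closure_minimal (fun x hx => by_contra fun h => hx (hχ_zero x h)) hK'.isClosed
  refine ⟨fun x => χ x • X x, contDiff_iff_contDiffAt.mpr fun x => ?_,
    HasCompactSupport.smul_right (hK'.of_isClosed_subset (isClosed_tsupport _) hχ_tsupport),
    fun x hx => ?_⟩
  · by_cases hx : x ∈ U
    · exact χ.contMDiff.contDiff.contDiffAt.smul (hX.contDiffAt (hU.mem_nhds hx))
    · have hχx : χ =ᶠ[nhds x] 0 :=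
        notMem_tsupport_iff_eventuallyEq.mp fun h => hx (hK'U (hχ_tsupport h))
      refine (contDiffAt_const (c := 0)).congr_of_eventuallyEq ?_
      filter_upwards [hχx] with y hy
      rw [hy, Pi.zero_apply, zero_smul]
  · filter_upwards [eventually_nhdsSet_iff_forall.mp hχ_one x hx] with y hy
    rw [hy, one_smul]

variable [MeasurableSpace E] [BorelSpace E] {μ : Measure E} [μ.IsAddHaarMeasure]

lemma integral_mul_divergence_eq_neg_of_tsupport_subset {φ : E → ℝ} {X : E → E} {U : Set E}
    {L : NNReal} (hφ : LipschitzWith L φ) (hφc : HasCompactSupport φ) (hφU : tsupport φ ⊆ U)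
    (hU : IsOpen U) (hX : ContDiffOn ℝ 1 X U) :
    Integrable (fun x => φ x * divergence X x) μ ∧ Integrable (fun x => fderiv ℝ φ x (X x)) μ ∧
      ∫ x, φ x * divergence X x ∂μ = -∫ x, fderiv ℝ φ x (X x) ∂μ := by
  obtain ⟨Y, hY, hYc, hYX⟩ := exists_contDiff_hasCompactSupport_eventuallyEq hφc hU hφU hX
  have hdiv x : φ x * divergence X x = φ x * divergence Y x := by
    by_cases hx : x ∈ tsupport φ
    · rw [divergence, divergence, (hYX x hx).fderiv_eq]
    · rw [image_eq_zero_of_notMem_tsupport hx, zero_mul, zero_mul]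
  have happly x : fderiv ℝ φ x (X x) = fderiv ℝ φ x (Y x) := by
    by_cases hx : x ∈ tsupport φ
    · rw [(hYX x hx).eq_of_nhds]
    · rw [fderiv_of_notMem_tsupport ℝ hx, zero_apply, zero_apply]
  simp_rw [hdiv, happly]
  exact ⟨(hφ.continuous.mul (continuous_divergence hY)).integrable_of_hasCompactSupport
      hφc.mul_right, integrable_fderiv_apply_of_lipschitzWith hφ hY.continuous hYc,
    integral_mul_divergence_eq_neg hφ hY hYc⟩

lemma integral_abs_rpow_mul_divergence_le {u δ : E → ℝ} {X : E → E} {U : Set E} {L : NNReal}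
    {p c K : ℝ} (hp : 1 < p) (hu : LipschitzWith L u) (huc : HasCompactSupport u)
    (huU : tsupport u ⊆ U) (hU : IsOpen U) (hX : ContDiffOn ℝ 1 X U) (hδ : ∀ x ∈ U, 0 < δ x)
    (hc : 0 < c) (hdiv : ∀ x ∈ U, c * δ x ^ (-p) ≤ divergence X x)
    (hnorm : ∀ x ∈ U, ‖X x‖ ≤ K * δ x ^ (1 - p)) :
    Integrable (fun x => |u x| ^ p * divergence X x) μ ∧
      ∫ x, |u x| ^ p * divergence X x ∂μ ≤
        c * (p * K / c) ^ p * ∫ x, ‖fderiv ℝ u x‖ ^ p ∂μ := by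
  have hp₀ : 0 < p := by linarith
  obtain ⟨B, hB⟩ := hu.continuous.bounded_above_of_compact_support huc
  obtain ⟨M, hM⟩ := exists_lipschitzWith_abs_rpow hp hu hB
  have hsupp : tsupport (fun x => |u x| ^ p) ⊆ tsupport u :=
    closure_mono <| Function.support_subset_iff'.mpr fun x hx => by
      rw [Function.notMem_support.mp hx, abs_zero, Real.zero_rpow hp₀.ne']
  obtain ⟨hint, hint', hibp⟩ := integral_mul_divergence_eq_neg_of_tsupport_subset (μ := μ) hM
    (huc.of_isClosed_subset (isClosed_tsupport _) hsupp) (hsupp.trans huU) hU hX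
  have hintD := integrable_norm_fderiv_rpow (μ := μ) hp₀ hu huc
  refine ⟨hint, ?_⟩
  have hpointwise : ∀ᵐ x ∂μ, -fderiv ℝ (fun y => |u y| ^ p) x (X x) ≤
      (1 - 1 / p) * (|u x| ^ p * divergence X x) +
        c / p * (p * K / c) ^ p * ‖fderiv ℝ u x‖ ^ p := by
    filter_upwards [hu.ae_differentiableAt] with x hux
    by_cases hx : x ∈ tsupport u
    · exact neg_fderiv_abs_rpow_apply_le hp hux hc (hδ x (huU hx)) (hnorm x (huU hx))
        (hdiv x (huU hx))
    · rw [fderiv_of_notMem_tsupport ℝ (mt (@hsupp x) hx), fderiv_of_notMem_tsupport ℝ hx,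
        image_eq_zero_of_notMem_tsupport hx]
      simp [Real.zero_rpow hp₀.ne']
  have habsorb := integral_mono_ae hint'.neg
    ((hint.const_mul (1 - 1 / p)).add (hintD.const_mul _)) hpointwise
  simp only [Pi.neg_apply, Pi.add_apply, integral_neg] at habsorb
  rw [← hibp, integral_add (hint.const_mul _) (hintD.const_mul _), integral_const_mul,
    integral_const_mul] at habsorb
  field_simp at habsorb ⊢
  linarith

theorem hardyBound_of_divergence {δ : E → ℝ} {X : E → E} {U : Set E} {p c K : ℝ} (hp : 1 < p)
    (hU : IsOpen U) (hX : ContDiffOn ℝ 1 X U) (hδ : ∀ x ∈ U, 0 < δ x) (hc : 0 < c) (hK : 0 ≤ K)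
    (hdiv : ∀ x ∈ U, c * δ x ^ (-p) ≤ divergence X x)
    (hnorm : ∀ x ∈ U, ‖X x‖ ≤ K * δ x ^ (1 - p)) :
    HardyBound μ p U Set.univ δ (.ofReal ((p * K / c) ^ p)) := by
  rintro u ⟨L, hu⟩ huc huU
  have hp₀ : 0 < p := by linarith
  obtain ⟨hint, hle⟩ := integral_abs_rpow_mul_divergence_le (μ := μ) hp hu huc huU hU hX hδ hc
    hdiv hnorm
  have hpointwise x : |u x| ^ p * δ x ^ (-p) ≤ c⁻¹ * (|u x| ^ p * divergence X x) ∧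
      0 ≤ |u x| ^ p * divergence X x := by
    by_cases hx : x ∈ tsupport u
    · have hδx := hδ x (huU hx)
      have hdivx := hdiv x (huU hx)
      refine ⟨?_, mul_nonneg (by positivity) (le_trans (by positivity) hdivx)⟩
      rw [mul_left_comm]
      gcongr
      rwa [le_inv_mul_iff₀ hc]
    · simp [image_eq_zero_of_notMem_tsupport hx, Real.zero_rpow hp₀.ne']
  rw [Measure.restrict_univ]
  calc ∫⁻ x, .ofReal (|u x| ^ p * δ x ^ (-p)) ∂μ
      ≤ ∫⁻ x, .ofReal (c⁻¹ * (|u x| ^ p * divergence X x)) ∂μ :=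
        lintegral_mono fun x => ofReal_le_ofReal (hpointwise x).1
    _ = .ofReal (c⁻¹ * ∫ x, |u x| ^ p * divergence X x ∂μ) := by
        rw [← ofReal_integral_eq_lintegral_ofReal (hint.const_mul _)
          (.of_forall fun x => mul_nonneg (by positivity) (hpointwise x).2), integral_const_mul]
    _ ≤ .ofReal ((p * K / c) ^ p * ∫ x, ‖fderiv ℝ u x‖ ^ p ∂μ) := by
        refine ofReal_le_ofReal ?_
        rwa [inv_mul_le_iff₀ hc, ← mul_assoc]
    _ = _ := by
        rw [ofReal_mul (by positivity), ofReal_integral_eq_lintegral_ofReal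
          (integrable_norm_fderiv_rpow hp₀ hu huc) (.of_forall fun x => by positivity)]

end VectorFieldMethod

section RadialFields

variable {E : Type*} [NormedAddCommGroup E] [InnerProductSpace ℝ E]

/-- The radial vector field about `w` whose signed length at distance `t` from `w` is `h t`;
it vanishes at `w` itself because division by zero gives zero. -/
noncomputable def radialField (h : ℝ → ℝ) (w x : E) : E :=
  (h ‖x - w‖ / ‖x - w‖) • (x - w)

lemma norm_radialField {h : ℝ → ℝ} {w x : E} (hx : 0 < ‖x - w‖) :
    ‖radialField h w x‖ = |h ‖x - w‖| := by
  rw [radialField, norm_smul, norm_div, norm_norm, div_mul_cancel₀ _ hx.ne', Real.norm_eq_abs]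

lemma contDiffOn_radialField {h : ℝ → ℝ} {T : Set ℝ} (hT : T ⊆ Set.Ioi 0)
    (hh : ContDiffOn ℝ 1 h T) (w : E) : ContDiffOn ℝ 1 (radialField h w) {x | ‖x - w‖ ∈ T} := by
  have hsub : ContDiffOn ℝ 1 (fun x : E => x - w) {x | ‖x - w‖ ∈ T} := by fun_prop
  have hnorm : ContDiffOn ℝ 1 (fun x : E => ‖x - w‖) {x | ‖x - w‖ ∈ T} :=
    hsub.norm ℝ fun x hx => norm_pos_iff.mp (hT hx)
  exact ((hh.comp hnorm fun x hx => hx).div hnorm fun x hx => (hT hx).ne').smul hsub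

lemma divergence_radialField [FiniteDimensional ℝ E] {h : ℝ → ℝ} {w x : E} (hx : 0 < ‖x - w‖)
    (hh : DifferentiableAt ℝ h ‖x - w‖) :
    divergence (radialField h w) x =
      deriv h ‖x - w‖ + (Module.finrank ℝ E - 1) * h ‖x - w‖ / ‖x - w‖ := by
  have hnorm : DifferentiableAt ℝ (fun y : E => ‖y - w‖) x :=
    (by fun_prop : DifferentiableAt ℝ (fun y : E => y - w) x).norm ℝ (norm_pos_iff.mp hx)
  have hradial : fderiv ℝ (fun y : E => ‖y - w‖) x (x - w) = ‖x - w‖ := by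
    rw [fderiv_comp_sub (f := fun y : E => ‖y‖)]
    exact (differentiableAt_id.norm ℝ (norm_pos_iff.mp hx)).fderiv_norm_self
  have hcoeff := (hh.hasDerivAt.div (hasDerivAt_id _) hx.ne').comp_hasFDerivAt x hnorm.hasFDerivAt
  have heq := divergence_smul hcoeff.differentiableAt
    (by fun_prop : DifferentiableAt ℝ (fun y : E => y - w) x)
  rw [hcoeff.fderiv, divergence_sub_const] at heq
  refine heq.trans ?_
  simp only [smul_apply, hradial, smul_eq_mul, id, Function.comp_apply, Pi.div_apply]
  field_simp
  ring

variable [FiniteDimensional ℝ E] [MeasurableSpace E] [BorelSpace E] {μ : Measure E}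
  [μ.IsAddHaarMeasure] {p : ℝ}

theorem hardyBound_of_radial {h d : ℝ → ℝ} {T : Set ℝ} {c K : ℝ} (hp : 1 < p) (hT : IsOpen T)
    (hT₀ : T ⊆ Set.Ioi 0) (hh : ContDiffOn ℝ 1 h T) (hd : ∀ t ∈ T, 0 < d t) (hc : 0 < c)
    (hK : 0 ≤ K)
    (hdiv : ∀ t ∈ T, c * d t ^ (-p) ≤ deriv h t + (Module.finrank ℝ E - 1) * h t / t)
    (hnorm : ∀ t ∈ T, |h t| ≤ K * d t ^ (1 - p)) (w : E) :
    HardyBound μ p {x | ‖x - w‖ ∈ T} Set.univ (fun x => d ‖x - w‖)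
      (.ofReal ((p * K / c) ^ p)) := by
  refine hardyBound_of_divergence hp (hT.preimage (by fun_prop)) (contDiffOn_radialField hT₀ hh w)
    (fun x hx => hd _ hx) hc hK (fun x hx => ?_) fun x hx => ?_
  · rw [divergence_radialField (hT₀ hx)
      ((hh.differentiableOn one_ne_zero).differentiableAt (hT.mem_nhds hx))]
    exact hdiv _ hx
  · rw [norm_radialField (hT₀ hx)]
    exact hnorm _ hx

theorem hardyBound_ball_diff_singleton [Nontrivial E] (hp : 1 < p) (w : E) (R : ℝ) :
    HardyBound μ p (ball w R \ {w}) Set.univ (fun x => R - ‖x - w‖)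
      (.ofReal ((p / (p - 1)) ^ p)) := by
  have hconst : p / (p - 1) = p * 1 / (p - 1) := by rw [mul_one]
  have hball : ball w R \ {w} = {x | ‖x - w‖ ∈ Set.Ioo 0 R} := by
    ext x
    simp [dist_eq_norm, and_comm, sub_eq_zero]
  have hdim : (0 : ℝ) ≤ Module.finrank ℝ E - 1 :=
    sub_nonneg.mpr (by exact_mod_cast Module.finrank_pos)
  rw [hball, hconst]
  refine hardyBound_of_radial (h := fun t => (R - t) ^ (1 - p)) (d := fun t => R - t) hp isOpen_Ioo
    (fun t ht => ht.1)
    (ContDiffOn.rpow_const_of_ne (by fun_prop) fun t ht => (sub_pos.mpr ht.2).ne')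
    (fun t ht => sub_pos.mpr ht.2) (sub_pos.mpr hp) zero_le_one ?_ ?_ w <;>
  rintro t ⟨ht₀, htR⟩ <;>
  have htR' := sub_pos.mpr htR
  · have hderiv : HasDerivAt (fun s => (R - s) ^ (1 - p))
        (-1 * (1 - p) * (R - t) ^ (1 - p - 1)) t :=
      ((hasDerivAt_id t).const_sub R).rpow_const (.inl htR'.ne')
    have hrest : 0 ≤ (Module.finrank ℝ E - 1) * (R - t) ^ (1 - p) / t := by positivity
    rw [hderiv.deriv, sub_sub_cancel_left]
    linarith
  · rw [one_mul, abs_of_pos (by positivity)]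

lemma rpow_one_sub_div_le {s t ε : ℝ} (hp : 1 < p) (hs : 0 < s) (ht : 0 < t) (hε : 0 < ε) :
    s ^ (1 - p) / t ≤ ε * s ^ (-p) + ε ^ (1 - p) * t ^ (-p) := by
  rw [div_le_iff₀ ht]
  obtain hst | hst := le_total s (ε * t)
  · calc s ^ (1 - p) = s * s ^ (-p) := by
          rw [sub_eq_add_neg, Real.rpow_one_add' hs.le (by linarith)]
      _ ≤ ε * t * s ^ (-p) := by gcongr
      _ ≤ _ := by
        have : 0 ≤ ε ^ (1 - p) * t ^ (-p) * t := by positivity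
        linarith
  · calc s ^ (1 - p) ≤ (ε * t) ^ (1 - p) :=
          Real.rpow_le_rpow_of_nonpos (by positivity) hst (by linarith)
      _ = ε ^ (1 - p) * t ^ (-p) * t := by
        rw [Real.mul_rpow hε.le ht.le, sub_eq_neg_add 1 p, Real.rpow_add_one ht.ne', mul_assoc]
      _ ≤ _ := by
        have : 0 ≤ ε * s ^ (-p) * t := by positivity
        linarith

-- The cross term `(n - 1) (t - r) ^ (1 - p) / t` costs half of the good term
-- `(p - 1) (t - r) ^ (-p)`, and the choice of `α` makes `α t ^ (1 - p)` pay for the rest.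
lemma mul_rpow_neg_le_deriv_add {n r t α : ℝ} (hp : 1 < p) (hn : 1 < n) (hr : 0 ≤ r) (ht : r < t)
    (hα : α * (n - p) = (n - 1) * ((p - 1) / (2 * (n - 1))) ^ (1 - p)) :
    (p - 1) / 2 * (t - r) ^ (-p) ≤ deriv (fun t => α * t ^ (1 - p) - (t - r) ^ (1 - p)) t +
      (n - 1) * (α * t ^ (1 - p) - (t - r) ^ (1 - p)) / t := by
  have ht₀ := hr.trans_lt ht
  have hs := sub_pos.mpr ht
  have : 0 < p - 1 := sub_pos.mpr hp
  have hn₁ := sub_pos.mpr hn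
  have hderiv : HasDerivAt (fun t => α * t ^ (1 - p) - (t - r) ^ (1 - p))
      (α * (1 * (1 - p) * t ^ (1 - p - 1)) - 1 * (1 - p) * (t - r) ^ (1 - p - 1)) t :=
    (((hasDerivAt_id t).rpow_const (.inl ht₀.ne')).const_mul α).sub
      (((hasDerivAt_id t).sub_const r).rpow_const (.inl hs.ne'))
  have hcross := mul_le_mul_of_nonneg_left
    (rpow_one_sub_div_le hp hs ht₀ (ε := (p - 1) / (2 * (n - 1))) (by positivity)) hn₁.le
  have hhalf : (n - 1) * ((p - 1) / (2 * (n - 1))) = (p - 1) / 2 := by field_simp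
  have htp : t ^ (1 - p) / t = t ^ (-p) := by
    rw [← Real.rpow_sub_one ht₀.ne', sub_sub_cancel_left]
  rw [hderiv.deriv, sub_sub_cancel_left]
  linear_combination hcross + (t - r) ^ (-p) * hhalf - t ^ (-p) * hα - (n - 1) * α * htp

theorem exists_hardyBound_compl_closedBall (hp : 1 < p) (hpn : p < Module.finrank ℝ E) :
    ∃ C ≠ ∞, ∀ (w : E) (r : ℝ), 0 ≤ r →
      HardyBound μ p (closedBall w r)ᶜ Set.univ (fun x => ‖x - w‖ - r) C := by
  set n : ℝ := (Module.finrank ℝ E : ℝ)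
  have : 0 < p - 1 := sub_pos.mpr hp
  have hn₁ : 0 < n - 1 := by linarith
  have hnp : 0 < n - p := sub_pos.mpr hpn
  obtain ⟨α, hα₀, hα⟩ : ∃ α : ℝ, 0 ≤ α ∧
      α * (n - p) = (n - 1) * ((p - 1) / (2 * (n - 1))) ^ (1 - p) :=
    ⟨_, by positivity, div_mul_cancel₀ _ hnp.ne'⟩
  refine ⟨.ofReal ((p * (α + 1) / ((p - 1) / 2)) ^ p), ofReal_ne_top, fun w r hr => ?_⟩
  have hcompl : (closedBall w r)ᶜ = {x | ‖x - w‖ ∈ Set.Ioi r} := by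
    ext x
    simp [dist_eq_norm]
  rw [hcompl]
  refine hardyBound_of_radial (h := fun t => α * t ^ (1 - p) - (t - r) ^ (1 - p))
    (d := fun t => t - r) hp isOpen_Ioi (Set.Ioi_subset_Ioi hr)
    (.sub (.mul contDiffOn_const (.rpow_const_of_ne contDiffOn_id fun t ht => (hr.trans_lt ht).ne'))
      (.rpow_const_of_ne (by fun_prop) fun t ht => (sub_pos.mpr ht).ne'))
    (fun t ht => sub_pos.mpr ht) (by positivity) (by positivity)
    (fun t ht => mul_rpow_neg_le_deriv_add hp (by linarith) hr ht hα) (fun t ht => ?_) w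
  have hs : 0 < t - r := sub_pos.mpr ht
  have ht₀ : 0 < t := hr.trans_lt ht
  have htr : α * t ^ (1 - p) ≤ α * (t - r) ^ (1 - p) := mul_le_mul_of_nonneg_left
    (Real.rpow_le_rpow_of_nonpos hs (by linarith) (by linarith)) hα₀
  have : 0 ≤ (t - r) ^ (1 - p) := by positivity
  have : 0 ≤ α * t ^ (1 - p) := by positivity
  exact abs_le.mpr ⟨by linarith, by linarith⟩

lemma exists_hardyBound_norm (hp : 1 < p) (hpn : p < Module.finrank ℝ E) :
    ∃ C ≠ ∞, HardyBound μ p {0}ᶜ Set.univ (‖·‖) C := by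
  obtain ⟨C, hC, hbound⟩ := exists_hardyBound_compl_closedBall (μ := μ) hp hpn
  exact ⟨C, hC, by simpa using hbound 0 0 le_rfl⟩

end RadialFields

section Localization

open Function

lemma lipschitzWith_mul_of_norm_le {α R : Type*} [PseudoMetricSpace α] [SeminormedRing R]
    {f g : α → R} {K L A B : NNReal} (hf : LipschitzWith K f) (hg : LipschitzWith L g)
    (hfA : ∀ x, ‖f x‖ ≤ A) (hgB : ∀ x, ‖g x‖ ≤ B) :
    LipschitzWith (K * B + A * L) fun x => f x * g x := by
  refine LipschitzWith.of_dist_le_mul fun x y => ?_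
  have hsplit : f x * g x - f y * g y = (f x - f y) * g x + f y * (g x - g y) := by noncomm_ring
  rw [dist_eq_norm, hsplit]
  calc ‖(f x - f y) * g x + f y * (g x - g y)‖
      ≤ ‖f x - f y‖ * ‖g x‖ + ‖f y‖ * ‖g x - g y‖ :=
        (norm_add_le _ _).trans (add_le_add (norm_mul_le _ _) (norm_mul_le _ _))
    _ ≤ K * dist x y * B + A * (L * dist x y) := by
        gcongr
        · exact dist_eq_norm (f x) _ ▸ hf.dist_le_mul x y
        · exact hgB x
        · exact hfA y
        · exact dist_eq_norm (g x) _ ▸ hg.dist_le_mul x y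
    _ = _ := by
        push_cast
        ring

variable {E : Type*} [NormedAddCommGroup E] [NormedSpace ℝ E]

lemma norm_fderiv_mul_le_indicator {φ u : E → ℝ} {K : NNReal} {T : Set E} {x : E}
    (hφ : LipschitzWith K φ) (hφ₀ : ∀ y, 0 ≤ φ y) (hφ₁ : φ x ≤ 1) (hφT : ∀ y ∉ T, φ y = 0)
    (hφx : DifferentiableAt ℝ φ x) (hux : DifferentiableAt ℝ u x) :
    ‖fderiv ℝ (fun y => φ y * u y) x‖ ≤ T.indicator (fun y => ‖fderiv ℝ u y‖ + |u y| * K) x := by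
  rw [fderiv_fun_mul hφx hux]
  by_cases hx : x ∈ T
  · rw [Set.indicator_of_mem hx]
    refine (norm_add_le _ _).trans (add_le_add ?_ ?_)
    · rw [norm_smul, Real.norm_of_nonneg (hφ₀ x)]
      exact mul_le_of_le_one_left (norm_nonneg _) hφ₁
    · rw [norm_smul, Real.norm_eq_abs]
      gcongr
      exact norm_fderiv_le_of_lipschitz ℝ hφ
  · have hmin : IsLocalMin φ x := .of_forall fun y => (hφT x hx).symm ▸ hφ₀ y
    simp [Set.indicator_of_notMem hx, hφT x hx, hmin.fderiv_eq_zero]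

lemma ofReal_add_rpow_le {a b p : ℝ} (hp : 1 ≤ p) (ha : 0 ≤ a) (hb : 0 ≤ b) :
    ENNReal.ofReal ((a + b) ^ p) ≤ 2 ^ (p - 1) * (.ofReal (a ^ p) + .ofReal (b ^ p)) := by
  have hp₀ : 0 ≤ p := by linarith
  rw [← ofReal_rpow_of_nonneg (by positivity) hp₀, ← ofReal_rpow_of_nonneg ha hp₀,
    ← ofReal_rpow_of_nonneg hb hp₀, ofReal_add ha hb]
  exact rpow_add_le_mul_rpow_add_rpow _ _ hp

lemma ofReal_mul_inv_rpow_le {a s t M p : ℝ} (hp : 0 ≤ p) (ha : 0 ≤ a) (hs : 0 < s) (ht : 0 < t)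
    (hts : t ≤ M * s) :
    ENNReal.ofReal ((a * s⁻¹) ^ p) ≤ .ofReal (M ^ p) * .ofReal (a ^ p * t ^ (-p)) := by
  have hM : 0 ≤ M := nonneg_of_mul_nonneg_left (ht.le.trans hts) hs
  have hinv : s⁻¹ ≤ M * t⁻¹ := by
    field_simp
    rwa [mul_comm]
  rw [← ofReal_mul (by positivity), mul_left_comm, Real.rpow_neg ht.le, ← Real.inv_rpow ht.le,
    ← Real.mul_rpow hM (by positivity), ← Real.mul_rpow ha (by positivity)]
  gcongr

lemma lintegral_norm_fderiv_mul_rpow_le [FiniteDimensional ℝ E] [MeasurableSpace E] [BorelSpace E]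
    {μ : Measure E} [μ.IsAddHaarMeasure] {φ u : E → ℝ} {K L : NNReal} {T : Set E} {p : ℝ}
    (hp : 1 ≤ p) (hφ : LipschitzWith K φ) (hu : LipschitzWith L u) (hT : MeasurableSet T)
    (hφ₀ : ∀ x, 0 ≤ φ x) (hφ₁ : ∀ x, φ x ≤ 1) (hφT : ∀ x ∉ T, φ x = 0) :
    ∫⁻ x, .ofReal (‖fderiv ℝ (fun y => φ y * u y) x‖ ^ p) ∂μ ≤ 2 ^ (p - 1) *
      ∫⁻ x in T, (.ofReal (‖fderiv ℝ u x‖ ^ p) + .ofReal ((|u x| * K) ^ p)) ∂μ := by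
  rw [← lintegral_const_mul' _ _ (by finiteness), ← lintegral_indicator hT]
  refine lintegral_mono_ae ?_
  filter_upwards [hφ.ae_differentiableAt, hu.ae_differentiableAt] with x hφx hux
  have hle := norm_fderiv_mul_le_indicator hφ hφ₀ (hφ₁ x) hφT hφx hux
  by_cases hx : x ∈ T
  · rw [Set.indicator_of_mem hx] at hle ⊢
    refine le_trans ?_ (ofReal_add_rpow_le hp (norm_nonneg _) (by positivity))
    gcongr
  · rw [Set.indicator_of_notMem hx] at hle ⊢
    rw [norm_le_zero_iff.mp hle, norm_zero, Real.zero_rpow (by linarith), ofReal_zero]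

namespace HardyBound

variable [MeasurableSpace E] {μ : Measure E} {p : ℝ} {U V A B : Set E} {δ ρ : E → ℝ} {C D : ℝ≥0∞}

lemma mono (h : HardyBound μ p U A δ C) {c : ℝ} (hp : 0 < p) (hc : 0 < c) (hVU : V ⊆ U)
    (hBA : B ⊆ A) (hB : MeasurableSet B) (hδ : ∀ x ∈ V, 0 < δ x)
    (hρ : ∀ x ∈ V, x ∈ B → c * δ x ≤ ρ x) :
    HardyBound μ p V B ρ (.ofReal (c ^ (-p)) * C) := by
  intro u hu huc huV
  have hpointwise x (hx : x ∈ B) : ENNReal.ofReal (|u x| ^ p * ρ x ^ (-p)) ≤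
      .ofReal (c ^ (-p)) * .ofReal (|u x| ^ p * δ x ^ (-p)) := by
    rw [← ofReal_mul (by positivity)]
    refine ofReal_le_ofReal ?_
    by_cases hxV : x ∈ tsupport u
    · have hδx := hδ x (huV hxV)
      calc |u x| ^ p * ρ x ^ (-p) ≤ |u x| ^ p * (c * δ x) ^ (-p) := by
            have := Real.rpow_le_rpow_of_nonpos (by positivity) (hρ x (huV hxV) hx)
              (neg_nonpos.mpr hp.le)
            gcongr
        _ = _ := by
            rw [Real.mul_rpow hc.le hδx.le]
            ring
    · simp [image_eq_zero_of_notMem_tsupport hxV, Real.zero_rpow hp.ne']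
  calc ∫⁻ x in B, .ofReal (|u x| ^ p * ρ x ^ (-p)) ∂μ
      ≤ ∫⁻ x in B, .ofReal (c ^ (-p)) * .ofReal (|u x| ^ p * δ x ^ (-p)) ∂μ :=
        setLIntegral_mono' hB hpointwise
    _ = .ofReal (c ^ (-p)) * ∫⁻ x in B, .ofReal (|u x| ^ p * δ x ^ (-p)) ∂μ :=
        lintegral_const_mul' _ _ ofReal_ne_top
    _ ≤ .ofReal (c ^ (-p)) * (C * ∫⁻ x, .ofReal (‖fderiv ℝ u x‖ ^ p) ∂μ) := by
        gcongr
        exact (lintegral_mono_set hBA).trans (h u hu huc (huV.trans hVU))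
    _ = _ := (mul_assoc _ _ _).symm

lemma union (hA : HardyBound μ p U A δ C) (hB : HardyBound μ p U B δ D) :
    HardyBound μ p U (A ∪ B) δ (C + D) := by
  intro u hu huc huU
  rw [add_mul]
  exact (lintegral_union_le _ A B).trans (add_le_add (hA u hu huc huU) (hB u hu huc huU))

variable [BorelSpace E] [FiniteDimensional ℝ E] [μ.IsAddHaarMeasure]

lemma localize (h : HardyBound μ p U A δ C) (hp : 1 ≤ p) (hA : MeasurableSet A) {ε : ℝ}
    (hε : 0 < ε) {u : E → ℝ} {L : NNReal} (hu : LipschitzWith L u) (huc : HasCompactSupport u)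
    (huU : tsupport u ⊆ U) :
    ∫⁻ x in A, .ofReal (|u x| ^ p * δ x ^ (-p)) ∂μ ≤
      C * (2 ^ (p - 1) * ∫⁻ x in thickening ε A,
        (.ofReal (‖fderiv ℝ u x‖ ^ p) + .ofReal ((|u x| * ε⁻¹) ^ p)) ∂μ) := by
  let φ x : ℝ := thickenedIndicator hε A x
  have hφ : LipschitzWith ε⁻¹.toNNReal φ :=
    Real.toNNReal_inv (x := ε) ▸ lipschitzWith_thickenedIndicator hε A
  have hφ₀ x : 0 ≤ φ x := NNReal.coe_nonneg _
  have hφ₁ x : φ x ≤ 1 := NNReal.coe_le_one.mpr (thickenedIndicator_le_one hε A x)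
  have hφA x (hx : x ∈ A) : φ x = 1 := NNReal.coe_eq_one.mpr (thickenedIndicator_one hε A hx)
  have hφT x (hx : x ∉ thickening ε A) : φ x = 0 :=
    NNReal.coe_eq_zero.mpr (thickenedIndicator_zero hε A hx)
  obtain ⟨M, hM⟩ := hu.continuous.bounded_above_of_compact_support huc
  have hv : LipschitzWith (ε⁻¹.toNNReal * M.toNNReal + 1 * L) fun x => φ x * u x :=
    lipschitzWith_mul_of_norm_le hφ hu (fun x => (Real.norm_of_nonneg (hφ₀ x)).trans_le (hφ₁ x))
      fun x => (hM x).trans (Real.le_coe_toNNReal M)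
  have henergy := lintegral_norm_fderiv_mul_rpow_le (μ := μ) hp hφ hu
    isOpen_thickening.measurableSet hφ₀ hφ₁ hφT
  rw [Real.coe_toNNReal _ (by positivity)] at henergy
  calc ∫⁻ x in A, .ofReal (|u x| ^ p * δ x ^ (-p)) ∂μ
      = ∫⁻ x in A, .ofReal (|φ x * u x| ^ p * δ x ^ (-p)) ∂μ :=
        setLIntegral_congr_fun hA fun x hx => by simp only [hφA x hx, one_mul]
    _ ≤ C * ∫⁻ x, .ofReal (‖fderiv ℝ (fun y => φ y * u y) x‖ ^ p) ∂μ :=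
        h _ ⟨_, hv⟩ huc.mul_left (tsupport_mul_subset_right.trans huU)
    _ ≤ _ := by gcongr

lemma iUnion_of_pairwise_disjoint_thickening {ι : Type*} [Countable ι] {A : ι → Set E} {ε : ι → ℝ}
    {M : ℝ} (hp : 1 ≤ p) (hA : ∀ i, HardyBound μ p U (A i) δ C)
    (hAm : ∀ i, MeasurableSet (A i)) (hε : ∀ i, 0 < ε i)
    (hdisj : Pairwise (Disjoint on fun i => thickening (ε i) (A i)))
    (hρ : HardyBound μ p U Set.univ ρ D) (hρ₀ : ∀ x ∈ U, 0 < ρ x)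
    (hρM : ∀ i, ∀ x ∈ thickening (ε i) (A i), ρ x ≤ M * ε i) :
    HardyBound μ p U (⋃ i, A i) δ (C * (2 ^ (p - 1) * (1 + .ofReal (M ^ p) * D))) := by
  rintro u ⟨L, hu⟩ huc huU
  set T := fun i => thickening (ε i) (A i)
  set F := fun x => ENNReal.ofReal (‖fderiv ℝ u x‖ ^ p)
  set G := fun x => ENNReal.ofReal (|u x| ^ p * ρ x ^ (-p))
  have hpointwise i x (hx : x ∈ T i) :
      F x + .ofReal ((|u x| * (ε i)⁻¹) ^ p) ≤ F x + .ofReal (M ^ p) * G x := by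
    refine add_le_add_right ?_ _
    by_cases hxu : x ∈ tsupport u
    · exact ofReal_mul_inv_rpow_le (by linarith) (abs_nonneg _) (hε i) (hρ₀ x (huU hxu))
        (hρM i x hx)
    · simp [image_eq_zero_of_notMem_tsupport hxu, Real.zero_rpow (by linarith : p ≠ 0)]
  calc ∫⁻ x in ⋃ i, A i, .ofReal (|u x| ^ p * δ x ^ (-p)) ∂μ
      ≤ ∑' i, ∫⁻ x in A i, .ofReal (|u x| ^ p * δ x ^ (-p)) ∂μ := lintegral_iUnion_le _ _
    _ ≤ ∑' i, C * (2 ^ (p - 1) * ∫⁻ x in T i, (F x + .ofReal (M ^ p) * G x) ∂μ) := by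
        gcongr with i
        refine ((hA i).localize hp (hAm i) (hε i) hu huc huU).trans ?_
        gcongr C * (_ * ?_)
        exact setLIntegral_mono' isOpen_thickening.measurableSet (hpointwise i)
    _ = C * (2 ^ (p - 1) * ∫⁻ x in ⋃ i, T i, (F x + .ofReal (M ^ p) * G x) ∂μ) := by
        rw [ENNReal.tsum_mul_left, ENNReal.tsum_mul_left,
          lintegral_iUnion (fun i => isOpen_thickening.measurableSet) hdisj]
    _ ≤ C * (2 ^ (p - 1) * ∫⁻ x, (F x + .ofReal (M ^ p) * G x) ∂μ) := by
        gcongr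
        exact Measure.restrict_le_self
    _ = C * (2 ^ (p - 1) * (∫⁻ x, F x ∂μ + .ofReal (M ^ p) * ∫⁻ x, G x ∂μ)) := by
        rw [lintegral_add_left (by fun_prop), lintegral_const_mul' _ _ ofReal_ne_top]
    _ ≤ C * (2 ^ (p - 1) * (∫⁻ x, F x ∂μ + .ofReal (M ^ p) * (D * ∫⁻ x, F x ∂μ))) := by
        gcongr
        simpa using hρ u ⟨L, hu⟩ huc huU
    _ = _ := by ring

end HardyBound

end Localization

section PerforatedBall

/-- `Ω` admits a `p`-Hardy inequality: the integral of `|u| ^ p` against the `(-p)`-th power of the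
distance to the complement is controlled by the `p`-energy, uniformly over all Lipschitz functions
`u` with compact support in `Ω`. -/
def AdmitsHardyInequality {E : Type*} [NormedAddCommGroup E] [NormedSpace ℝ E] [MeasurableSpace E]
    (μ : Measure E) (p : ℝ) (Ω : Set E) : Prop :=
  ∃ C : ℝ, 0 < C ∧ ∀ u : E → ℝ,
    (∃ L : NNReal, LipschitzWith L u) → HasCompactSupport u → tsupport u ⊆ Ω →
    ∫⁻ x in Ω, .ofReal (|u x| ^ p * infDist x Ωᶜ ^ (-p)) ∂μ ≤
      .ofReal C * ∫⁻ x in Ω, .ofReal (‖fderiv ℝ u x‖ ^ p) ∂μ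

lemma HardyBound.admitsHardyInequality {E : Type*} [NormedAddCommGroup E] [NormedSpace ℝ E]
    [MeasurableSpace E] {μ : Measure E} {p : ℝ} {Ω : Set E} {C : ℝ≥0∞} (hp : 0 < p) (hC : C ≠ ∞)
    (h : HardyBound μ p Ω Set.univ (infDist · Ωᶜ) C) : AdmitsHardyInequality μ p Ω := by
  refine ⟨C.toReal + 1, by positivity, fun u hu huc huΩ => ?_⟩
  have hsupp : Function.support (fun x => ENNReal.ofReal (‖fderiv ℝ u x‖ ^ p)) ⊆ Ω := by
    refine Function.support_subset_iff'.mpr fun x hx => ?_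
    rw [fderiv_of_notMem_tsupport ℝ (mt (@huΩ x) hx), norm_zero, Real.zero_rpow hp.ne',
      ofReal_zero]
  have hC_le : C ≤ .ofReal (C.toReal + 1) := by
    rw [le_ofReal_iff_toReal_le hC (by positivity)]
    exact le_add_of_nonneg_right zero_le_one
  rw [setLIntegral_eq_of_support_subset hsupp]
  calc ∫⁻ x in Ω, .ofReal (|u x| ^ p * infDist x Ωᶜ ^ (-p)) ∂μ
      ≤ ∫⁻ x in Set.univ, .ofReal (|u x| ^ p * infDist x Ωᶜ ^ (-p)) ∂μ :=
        lintegral_mono_set (Set.subset_univ Ω)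
    _ ≤ C * ∫⁻ x, .ofReal (‖fderiv ℝ u x‖ ^ p) ∂μ := h u hu huc huΩ
    _ ≤ _ := by gcongr

variable {E ι : Type*} [NormedAddCommGroup E]

/-- The ball `B(0, R)` with the origin and the closed balls `closedBall (w i) (r i)` removed. -/
def perforatedBall (w : ι → E) (r : ι → ℝ) (R : ℝ) : Set E :=
  ball 0 R \ insert 0 (⋃ i, closedBall (w i) (r i))

variable {w : ι → E} {r : ι → ℝ} {R : ℝ} {x : E}

lemma zero_mem_compl_perforatedBall : 0 ∈ (perforatedBall w r R)ᶜ :=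
  fun h => h.2 (Set.mem_insert _ _)

lemma perforatedBall_subset_compl_singleton : perforatedBall w r R ⊆ {0}ᶜ :=
  fun _ hx h => hx.2 (.inl h)

lemma perforatedBall_subset_compl_closedBall (i : ι) :
    perforatedBall w r R ⊆ (closedBall (w i) (r i))ᶜ :=
  fun _ hx h => hx.2 (.inr (Set.mem_iUnion_of_mem i h))

-- The bounds `‖x‖ ≤ 40 / 39 * ‖y‖` and `‖y‖ ≤ 5 / 4 * ‖w i‖` give
-- `dist x (w i) ≤ (1 / 4 + 5 / 156) * ‖w i‖`, and `1 / 4 + 5 / 156 < 3 / 10 < 1 / 3`.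
lemma exists_mem_closedBall_of_mem_compl_perforatedBall (hr : ∀ i, r i ≤ ‖w i‖ / 4) {y : E}
    (hy : y ∈ (perforatedBall w r R)ᶜ) (hyR : dist x y < R - ‖x‖) (hyx : dist x y < ‖x‖ / 40) :
    ∃ i, y ∈ closedBall (w i) (r i) ∧ x ∈ closedBall (w i) (3 / 10 * ‖w i‖) := by
  have hy_ball : y ∈ ball (0 : E) R := by
    rw [mem_ball_zero_iff]
    linarith [norm_le_norm_add_norm_sub x y, dist_eq_norm x y]
  obtain rfl | hy_mem := Set.mem_insert_iff.mp (not_not.mp fun h => hy ⟨hy_ball, h⟩)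
  · rw [dist_zero_right] at hyx
    linarith [norm_nonneg x]
  · obtain ⟨i, hi⟩ := Set.mem_iUnion.mp hy_mem
    refine ⟨i, hi, ?_⟩
    have hyw := (mem_closedBall.mp hi).trans (hr i)
    rw [mem_closedBall]
    linarith [dist_triangle x y (w i), norm_le_norm_add_norm_sub' x (w i), dist_eq_norm x (w i),
      norm_nonneg (w i)]

lemma le_infDist_compl_perforatedBall_cases (hr : ∀ i, r i ≤ ‖w i‖ / 4) (hw₀ : ∀ i, w i ≠ 0)
    (hw : Pairwise fun i j => Disjoint (ball (w i) (‖w i‖ / 3)) (ball (w j) (‖w j‖ / 3))) (x : E) :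
    1 / 40 * ‖x‖ ≤ infDist x (perforatedBall w r R)ᶜ ∨
      R - ‖x‖ ≤ infDist x (perforatedBall w r R)ᶜ ∨
      ∃ i, x ∈ closedBall (w i) (3 / 10 * ‖w i‖) ∧
        ‖x - w i‖ - r i ≤ infDist x (perforatedBall w r R)ᶜ := by
  have hne : ((perforatedBall w r R)ᶜ).Nonempty := ⟨0, zero_mem_compl_perforatedBall⟩
  have hball i (hx : x ∈ closedBall (w i) (3 / 10 * ‖w i‖)) : x ∈ ball (w i) (‖w i‖ / 3) :=
    closedBall_subset_ball (by linarith [norm_pos_iff.mpr (hw₀ i)]) hx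
  by_contra! ⟨hx₀, hxR, hxw⟩
  have hnear ε (hε : infDist x (perforatedBall w r R)ᶜ < ε) :
      ∃ i, ∃ y ∈ closedBall (w i) (r i), dist x y < ε ∧
        x ∈ closedBall (w i) (3 / 10 * ‖w i‖) := by
    obtain ⟨y, hy, hxy⟩ := (infDist_lt_iff hne).mp (lt_min hε (lt_min hx₀ hxR))
    simp only [lt_min_iff] at hxy
    obtain ⟨i, hyi, hxi⟩ := exists_mem_closedBall_of_mem_compl_perforatedBall hr hy hxy.2.2
      (by linarith)
    exact ⟨i, y, hyi, hxy.1, hxi⟩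
  obtain ⟨i, _, _, _, hxi⟩ := hnear _ hx₀
  obtain ⟨j, y, hyj, hxy, hxj⟩ := hnear _ (hxw i hxi)
  obtain rfl : i = j :=
    hw.eq (Set.not_disjoint_iff.mpr ⟨x, hball i hxi, hball j hxj⟩)
  linarith [dist_triangle x y (w i), dist_eq_norm x (w i), mem_closedBall.mp hyj]

variable [InnerProductSpace ℝ E] [FiniteDimensional ℝ E] [MeasurableSpace E] [BorelSpace E]
  {μ : Measure E} [μ.IsAddHaarMeasure] {p : ℝ}

lemma exists_hardyBound_perforatedBall_iUnion [Countable ι] (hp : 1 < p)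
    (hpn : p < Module.finrank ℝ E) (hw₀ : ∀ i, w i ≠ 0) (hr₀ : ∀ i, 0 ≤ r i)
    (hw : Pairwise fun i j => Disjoint (ball (w i) (‖w i‖ / 3)) (ball (w j) (‖w j‖ / 3))) :
    ∃ C ≠ ∞, HardyBound μ p (perforatedBall w r R)
      (⋃ i, closedBall (w i) (3 / 10 * ‖w i‖) ∩
        {x | ‖x - w i‖ - r i ≤ infDist x (perforatedBall w r R)ᶜ})
      (infDist · (perforatedBall w r R)ᶜ) C := by
  have hp₀ : 0 < p := by linarith
  obtain ⟨C, hC, hext⟩ := exists_hardyBound_compl_closedBall (μ := μ) hp hpn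
  obtain ⟨D, hD, hnorm⟩ := exists_hardyBound_norm (μ := μ) hp hpn
  set Ω := perforatedBall w r R
  set A := fun i => closedBall (w i) (3 / 10 * ‖w i‖) ∩ {x | ‖x - w i‖ - r i ≤ infDist x Ωᶜ}
  have hΩ₀ : ∀ x ∈ Ω, 0 < ‖x‖ := fun x hx =>
    norm_pos_iff.mpr (perforatedBall_subset_compl_singleton hx)
  have hAm i : MeasurableSet (A i) :=
    (isClosed_closedBall.inter (isClosed_le (by fun_prop) (by fun_prop))).measurableSet
  have hA i : HardyBound μ p Ω (A i) (infDist · Ωᶜ) (.ofReal (1 ^ (-p)) * C) :=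
    (hext (w i) (r i) (hr₀ i)).mono hp₀ one_pos (perforatedBall_subset_compl_closedBall i)
      (Set.subset_univ _) (hAm i)
      (fun x hx => by simpa [dist_eq_norm] using perforatedBall_subset_compl_closedBall i hx)
      fun x _ hx => (one_mul _).trans_le hx.2
  have hε i : 0 < ‖w i‖ / 30 := div_pos (norm_pos_iff.mpr (hw₀ i)) (by norm_num)
  have hthick i : thickening (‖w i‖ / 30) (A i) ⊆ ball (w i) (‖w i‖ / 3) := by
    refine (thickening_subset_of_subset _ Set.inter_subset_left).trans ?_
    rw [thickening_closedBall (hε i) (by positivity)]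
    exact ball_subset_ball (by linarith)
  refine ⟨_, ?_, HardyBound.iUnion_of_pairwise_disjoint_thickening (M := 40) hp.le hA hAm hε
    (fun i j hij => (hw hij).mono (hthick i) (hthick j))
    (hnorm.mono hp₀ one_pos perforatedBall_subset_compl_singleton le_rfl .univ hΩ₀
      fun x _ _ => (one_mul _).le) hΩ₀ fun i x hx => ?_⟩
  · finiteness
  · have hxw := mem_ball.mp (hthick i hx)
    rw [dist_eq_norm] at hxw
    linarith [norm_le_norm_add_norm_sub' x (w i)]

theorem hardy_balls_sequence_example_general [Countable ι] (hp : 1 < p)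
    (hpn : p < Module.finrank ℝ E) (hw₀ : ∀ i, w i ≠ 0) (hr₀ : ∀ i, 0 ≤ r i)
    (hr : ∀ i, r i ≤ ‖w i‖ / 4)
    (hw : Pairwise fun i j => Disjoint (ball (w i) (‖w i‖ / 3)) (ball (w j) (‖w j‖ / 3))) :
    AdmitsHardyInequality μ p (perforatedBall w r R) := by
  have hp₀ : 0 < p := by linarith
  have : Nontrivial E :=
    Module.nontrivial_of_finrank_pos (R := ℝ) (by exact_mod_cast hp₀.trans hpn)
  obtain ⟨C, hC, hnorm⟩ := exists_hardyBound_norm (μ := μ) hp hpn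
  obtain ⟨D, hD, hholes⟩ :=
    exists_hardyBound_perforatedBall_iUnion (μ := μ) (R := R) hp hpn hw₀ hr₀ hw
  set Ω := perforatedBall w r R
  have hcenter : HardyBound μ p Ω {x | 1 / 40 * ‖x‖ ≤ infDist x Ωᶜ} (infDist · Ωᶜ) _ :=
    hnorm.mono hp₀ (by norm_num) perforatedBall_subset_compl_singleton (Set.subset_univ _)
      (isClosed_le (by fun_prop) (by fun_prop)).measurableSet
      (fun x hx => norm_pos_iff.mpr (perforatedBall_subset_compl_singleton hx)) fun x _ hx => hx
  have hsphere : HardyBound μ p Ω {x | R - ‖x‖ ≤ infDist x Ωᶜ} (infDist · Ωᶜ) _ :=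
    (hardyBound_ball_diff_singleton hp 0 R).mono hp₀ one_pos
      (Set.sdiff_subset_sdiff_right (Set.singleton_subset_iff.mpr (Set.mem_insert _ _)))
      (Set.subset_univ _) (isClosed_le (by fun_prop) (by fun_prop)).measurableSet
      (fun x hx => by simpa using hx.1) fun x _ hx => by simpa using hx
  have hcover : {x | 1 / 40 * ‖x‖ ≤ infDist x Ωᶜ} ∪ ({x | R - ‖x‖ ≤ infDist x Ωᶜ} ∪
      ⋃ i, closedBall (w i) (3 / 10 * ‖w i‖) ∩ {x | ‖x - w i‖ - r i ≤ infDist x Ωᶜ}) =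
      Set.univ :=
    Set.eq_univ_of_forall fun x => by
      simpa only [Set.mem_union, Set.mem_iUnion, Set.mem_inter_iff, Set.mem_ofPred_eq]
        using le_infDist_compl_perforatedBall_cases hr hw₀ hw x
  refine HardyBound.admitsHardyInequality hp₀ ?_ (hcover ▸ hcenter.union (hsphere.union hholes))
  finiteness

end PerforatedBall

section GeometricSequence

variable {E : Type*} [NormedAddCommGroup E] [NormedSpace ℝ E]

lemma pairwise_disjoint_ball_inv_two_pow_smul (e : E) :
    Pairwise fun i j : ℕ => Disjoint (ball (((2 : ℝ) ^ i)⁻¹ • e) (‖((2 : ℝ) ^ i)⁻¹ • e‖ / 3))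
      (ball (((2 : ℝ) ^ j)⁻¹ • e) (‖((2 : ℝ) ^ j)⁻¹ • e‖ / 3)) := by
  intro i j hij
  wlog hlt : i < j generalizing i j
  · exact (this hij.symm (hij.lt_or_gt.resolve_left hlt)).symm
  have hhalf : ‖((2 : ℝ) ^ j)⁻¹ • e‖ ≤ ‖((2 : ℝ) ^ i)⁻¹ • e‖ / 2 := by
    rw [norm_smul_of_nonneg (by positivity), norm_smul_of_nonneg (by positivity),
      ← div_mul_eq_mul_div]
    gcongr
    rw [div_eq_mul_inv, ← mul_inv, ← pow_succ]
    gcongr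
    · exact one_le_two
    · exact hlt
  refine ball_disjoint_ball ?_
  rw [dist_eq_norm]
  linarith [norm_sub_norm_le (((2 : ℝ) ^ i)⁻¹ • e) (((2 : ℝ) ^ j)⁻¹ • e),
    norm_nonneg (((2 : ℝ) ^ j)⁻¹ • e)]

lemma inv_two_pow_two_mul_le {j : ℕ} (hj : 2 ≤ j) :
    ((2 : ℝ) ^ (2 * j))⁻¹ ≤ ((2 : ℝ) ^ j)⁻¹ / 4 := by
  rw [two_mul, pow_add, mul_inv, div_eq_mul_inv]
  gcongr
  exact (by norm_num : (4 : ℝ) = 2 ^ 2).trans_le (pow_le_pow_right₀ one_le_two hj)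

theorem admitsHardyInequality_perforatedBall_inv_two_pow_smul {E : Type*} [NormedAddCommGroup E]
    [InnerProductSpace ℝ E] [FiniteDimensional ℝ E] [MeasurableSpace E] [BorelSpace E]
    {μ : Measure E} [μ.IsAddHaarMeasure] {p R : ℝ} (hp : 1 < p) (hpn : p < Module.finrank ℝ E)
    {e : E} (he : ‖e‖ = 1) :
    AdmitsHardyInequality μ p
      (perforatedBall (fun j : {j : ℕ // 2 ≤ j} => ((2 : ℝ) ^ (j : ℕ))⁻¹ • e)
        (fun j => ((2 : ℝ) ^ (2 * (j : ℕ)))⁻¹) R) := by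
  have hnorm (j : ℕ) : ‖((2 : ℝ) ^ j)⁻¹ • e‖ = ((2 : ℝ) ^ j)⁻¹ := by
    rw [norm_smul_of_nonneg (by positivity), he, mul_one]
  exact hardy_balls_sequence_example_general hp hpn
    (fun j => norm_pos_iff.mp (by rw [hnorm]; positivity)) (fun j => by positivity)
    (fun j => by rw [hnorm]; exact inv_two_pow_two_mul_le j.2)
    ((pairwise_disjoint_ball_inv_two_pow_smul e).comp_of_injective Subtype.val_injective)

end GeometricSequence

/-- (Second claim of Example 8.1 of the paper.) For `n ≥ 2`, the open
set `Ω = B(0,2) \ ({0} ∪ ⋃_{j ≥ 2} closedBall(2^{-j} e₁, 2^{-2j})) ⊆ ℝⁿ` admits a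
`p`-Hardy inequality for every `1 < p < n`. -/
theorem hardy_balls_sequence_example
    (n : ℕ) (hn : 2 ≤ n)
    (e₁ : EuclideanSpace ℝ (Fin n))
    (he₁ : e₁ = EuclideanSpace.single (⟨0, by omega⟩ : Fin n) (1 : ℝ))
    (Ω : Set (EuclideanSpace ℝ (Fin n)))
    (hΩ : Ω = Metric.ball 0 2 \
      (insert (0 : EuclideanSpace ℝ (Fin n))
        (⋃ j : ℕ, ⋃ (_ : 2 ≤ j),
          Metric.closedBall (((2 : ℝ) ^ j)⁻¹ • e₁) (((2 : ℝ) ^ (2 * j))⁻¹))))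
    (p : ℝ) (hp1 : 1 < p) (hpn : p < n) :
    ∃ C : ℝ, 0 < C ∧ ∀ u : EuclideanSpace ℝ (Fin n) → ℝ,
      (∃ L : NNReal, LipschitzWith L u) → HasCompactSupport u → tsupport u ⊆ Ω →
      ∫⁻ x in Ω, ENNReal.ofReal (|u x| ^ p * Metric.infDist x Ωᶜ ^ (-p)) ≤
        ENNReal.ofReal C * ∫⁻ x in Ω, ENNReal.ofReal (‖fderiv ℝ u x‖ ^ p) := by
  have h := admitsHardyInequality_perforatedBall_inv_two_pow_smul (μ := volume) (R := 2) (e := e₁)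
    hp1 (by simpa using hpn) (by rw [he₁, PiLp.norm_single, norm_one])
  rwa [perforatedBall, Set.iUnion_subtype, ← hΩ] at h
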